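/- Let H_1, ..., H_r be finitely generated free abelian groups, M_i a finitely generated Z[H_i]-module, and H the direct sum of the H_i, with Z[H_i] viewed as a subring of Z[H]. Then for each i, the order of the Z[H]-torsion submodule of M_i ⊗_{Z[H_i]} Z[H] equals the order of the Z[H_i]-torsion submodule of M_i (viewed in Z[H]). -/

import Mathlib

/-!
STATEMENT 1: Let `H₁, …, H_r` be finitely generated free abelian groups, `M i` a
finitely generated `ℤ[H i]`-module, and `H` the direct sum of the `H i`, with
`ℤ[H i]` viewed as a subring of `ℤ[H]`.  Then for each `i`, the order of the
`ℤ[H]`-torsion submodule of `M i ⊗_{ℤ[H i]} ℤ[H]` equals the order of the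
`ℤ[H i]`-torsion submodule of `M i` (viewed in `ℤ[H]`).

Here `H i = ℤ^{m i}` for a finite index type `ι`, `H = ∏ i, H i`, and the order
`ord_{R}(N)` of a finitely generated `R`-module `N` (the gcd of the maximal
minors of a presentation matrix, well-defined up to units) is rendered by the
predicate `IsOrderOf R N d`.
-/

open TensorProduct

/-- `d` is the zeroth order of the finitely generated module `M` over the
commutative ring `R`: for some finite presentation `R^r --α--> R^s → M → 0`
(with `s ≤ r`), `d` is a gcd of the `s × s` minors of `α`. -/
def IsOrderOf (R : Type*) [CommRing R] (M : Type*) [AddCommGroup M] [Module R M]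
    (d : R) : Prop :=
  ∃ (s r : ℕ) (_ : s ≤ r) (α : Matrix (Fin s) (Fin r) R)
    (p : (Fin s → R) →ₗ[R] M),
      Function.Surjective p ∧
      LinearMap.ker p = LinearMap.range α.mulVecLin ∧
      (∀ c : Fin s → Fin r, d ∣ (α.submatrix id c).det) ∧
      (∀ e : R, (∀ c : Fin s → Fin r, e ∣ (α.submatrix id c).det) → e ∣ d)

noncomputable section

variable {ι : Type} [Fintype ι] [DecidableEq ι] (m : ι → ℕ)

/-- `ℤ[H i]` where `H i = ℤ^{m i}`. -/
abbrev Ri (i : ι) : Type := AddMonoidAlgebra ℤ (Fin (m i) → ℤ)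

/-- `ℤ[H]` where `H = ⊕ i, H i` is the direct sum (= finite product). -/
abbrev RH : Type := AddMonoidAlgebra ℤ (∀ i, Fin (m i) → ℤ)

/-- `ℤ[H i]` is a subring of `ℤ[H]` via the inclusion of the `i`-th summand. -/
instance (i : ι) : Algebra (Ri m i) (RH m) :=
  (AddMonoidAlgebra.mapDomainRingHom ℤ
    (AddMonoidHom.single (fun i => Fin (m i) → ℤ) i)).toAlgebra

/-!
Write `R = ℤ[H i]` and let `K` be the sum of the other summands, so that `ℤ[H] = R[K]`. This ring
is free over `R`, so torsion commutes with base change, and a presentation of the torsion submodule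
base changes to one whose minors are the images of the original minors. Their gcd is unchanged
because the divisors in `R[K]` of a nonzero constant are, up to units, constants.
-/

section GCD

/-- `d` is a greatest common divisor of the set `s`; it is determined only up to associates,
and the gcd of `∅` or `{0}` is `0`. -/
def IsSetGCD {R : Type*} [Dvd R] (s : Set R) (d : R) : Prop :=
  (∀ a ∈ s, d ∣ a) ∧ ∀ e, (∀ a ∈ s, e ∣ a) → e ∣ d

/-- A map that carries every greatest common divisor of a set to one of the image of the set. -/
def PreservesGCD {R S : Type*} [Dvd R] [Dvd S] (f : R → S) : Prop :=
  ∀ ⦃s : Set R⦄ ⦃d : R⦄, IsSetGCD s d → IsSetGCD (f '' s) (f d)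

theorem PreservesGCD.of_mulEquiv_comp {R S T : Type*} [Dvd R] [Semigroup S] [Semigroup T]
    {f : R → S} (e : S ≃* T) (h : PreservesGCD (e ∘ f)) : PreservesGCD f := by
  intro s d hd
  simpa [IsSetGCD, e.surjective.forall, map_dvd_iff] using h hd

end GCD

section GroupRing

open scoped AddMonoidAlgebra

open AddMonoidAlgebra (single)

variable {R K : Type*}

-- Two unique sums in the supports of `f` and `g` would give two distinct elements of the
-- support of `f * g`, so both supports are singletons.
theorem exists_eq_single_of_mul_eq_single [Semiring R] [NoZeroDivisors R] [Add K]
    [TwoUniqueSums K] {f g : R[K]} {k : K} {a : R} (ha : a ≠ 0) (h : f * g = single k a) :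
    ∃ l b, f = single l b := by
  have hfg : f * g ≠ 0 := by
    rw [h]
    simpa using ha
  have hg : 0 < g.coeff.support.card := by
    simpa [Finset.card_pos, Finsupp.support_nonempty_iff] using right_ne_zero_of_mul hfg
  have add_eq : ∀ p ∈ f.coeff.support ×ˢ g.coeff.support,
      UniqueAdd f.coeff.support g.coeff.support p.1 p.2 → p.1 + p.2 = k := by
    intro p hp hunique
    rw [Finset.mem_product, Finsupp.mem_support_iff, Finsupp.mem_support_iff] at hp
    have hcoeff := AddMonoidAlgebra.coeff_mul_add_of_uniqueAdd hunique
    by_contra hne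
    rw [h, AddMonoidAlgebra.coeff_single, Finsupp.single_eq_of_ne hne] at hcoeff
    exact mul_ne_zero hp.1 hp.2 hcoeff.symm
  have hcard : f.coeff.support.card * g.coeff.support.card ≤ 1 := by
    by_contra! hlt
    obtain ⟨p, hp, q, hq, hpq, hup, huq⟩ := TwoUniqueSums.uniqueAdd_of_one_lt_card hlt
    have hq' := Finset.mem_product.1 hq
    obtain ⟨h₁, h₂⟩ := hup hq'.1 hq'.2 ((add_eq q hq huq).trans (add_eq p hp hup).symm)
    exact hpq (Prod.ext h₁.symm h₂.symm)
  have : Nonempty K := ⟨k⟩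
  obtain ⟨l, b, hf⟩ := Finsupp.card_support_le_one'.1 ((Nat.le_mul_of_pos_right _ hg).trans hcard)
  exact ⟨l, b, AddMonoidAlgebra.coeff_injective (by simpa using hf)⟩

theorem single_dvd_single_zero_iff [Semiring R] [AddGroup K] {k : K} {a b : R} :
    (single k b : R[K]) ∣ single 0 a ↔ b ∣ a := by
  constructor
  · rintro ⟨g, hg⟩
    refine ⟨g.coeff (-k), ?_⟩
    simpa [AddMonoidAlgebra.coeff_single_mul_apply] using congrArg (fun f => f.coeff 0) hg
  · rintro ⟨c, rfl⟩
    exact ⟨single (-k) c, by simp [AddMonoidAlgebra.single_mul_single]⟩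

-- A common divisor of the constants `single 0 a`, not all zero, is a monomial, and up to
-- a unit it is a constant.
theorem preservesGCD_single_zero [Semiring R] [NoZeroDivisors R] [AddGroup K] [TwoUniqueSums K] :
    PreservesGCD (single 0 : R → R[K]) := by
  rintro s d ⟨hdvd, hgreatest⟩
  simp only [IsSetGCD, Set.forall_mem_image]
  refine ⟨fun a ha => single_dvd_single_zero_iff.2 (hdvd a ha), fun e he => ?_⟩
  by_cases hs : ∃ a ∈ s, a ≠ 0
  · obtain ⟨a, ha, ha0⟩ := hs
    obtain ⟨g, hg⟩ := he ha
    obtain ⟨k, b, rfl⟩ := exists_eq_single_of_mul_eq_single ha0 hg.symm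
    simp only [single_dvd_single_zero_iff] at he ⊢
    exact hgreatest b fun a ha => he ha
  · push Not at hs
    have hd : d = 0 := zero_dvd_iff.1 (hgreatest 0 fun a ha => (hs a ha).symm ▸ dvd_rfl)
    simp [hd]

theorem preservesGCD_algebraMap_of_algEquiv {S : Type*} [CommSemiring R] [NoZeroDivisors R]
    [CommSemiring S] [Algebra R S] [AddCommGroup K] [TwoUniqueSums K] (e : S ≃ₐ[R] R[K]) :
    PreservesGCD (algebraMap R S) := by
  refine .of_mulEquiv_comp (e : S ≃* R[K]) ?_
  convert! preservesGCD_single_zero (R := R) (K := K) using 1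
  ext1 r
  exact e.commutes r

end GroupRing

section PiGroupRing

open scoped AddMonoidAlgebra

variable {κ : Type*} [DecidableEq κ] (A : κ → Type*) [∀ j, AddCommMonoid (A j)] (i : κ)

/-- The product of a family of additive monoids splits off its `i`-th factor, which is put last
to match `AddMonoidAlgebra.curryRingEquiv`. -/
def piSplitAtAddEquiv : (∀ j, A j) ≃+ (∀ j : {j // j ≠ i}, A j) × A i where
  toEquiv := (Equiv.piSplitAt i A).trans (Equiv.prodComm _ _)
  map_add' _ _ := rfl

theorem piSplitAtAddEquiv_single (x : A i) : piSplitAtAddEquiv A i (Pi.single i x) = (0, x) := by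
  refine Prod.ext (funext fun j => ?_) ?_
  · exact Pi.single_eq_of_ne j.2 x
  · exact Pi.single_eq_same i x

/-- The group ring of a product is a group ring over the group ring of the `i`-th factor. -/
def piGroupRingEquiv (R : Type*) [CommSemiring R] :
    R[∀ j, A j] ≃+* R[A i][∀ j : {j // j ≠ i}, A j] :=
  (AddMonoidAlgebra.mapDomainRingEquiv R (piSplitAtAddEquiv A i)).trans
    AddMonoidAlgebra.curryRingEquiv

theorem piGroupRingEquiv_mapDomainRingHom_single {R : Type*} [CommSemiring R] (f : R[A i]) :
    piGroupRingEquiv A i R (AddMonoidAlgebra.mapDomainRingHom R (AddMonoidHom.single A i) f) =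
      AddMonoidAlgebra.single 0 f := by
  induction f using AddMonoidAlgebra.induction_linear with
  | zero => simp
  | add f g hf hg => simp only [map_add, hf, hg, AddMonoidAlgebra.single_add]
  | single a r => simp [piGroupRingEquiv, piSplitAtAddEquiv_single]

end PiGroupRing

section Order

variable {R M : Type*} [CommRing R] [AddCommGroup M] [Module R M] {d : R}

theorem isOrderOf_iff_isSetGCD : IsOrderOf R M d ↔
    ∃ s r : ℕ, s ≤ r ∧ ∃ (α : Matrix (Fin s) (Fin r) R) (p : (Fin s → R) →ₗ[R] M),
      Function.Surjective p ∧ Function.Exact α.mulVecLin p ∧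
        IsSetGCD (Set.range fun c : Fin s → Fin r => (α.submatrix id c).det) d := by
  simp only [IsOrderOf, IsSetGCD, LinearMap.exact_iff, Set.forall_mem_range, exists_prop]

theorem IsOrderOf.of_linearEquiv {N : Type*} [AddCommGroup N] [Module R N] (e : M ≃ₗ[R] N)
    (h : IsOrderOf R M d) : IsOrderOf R N d := by
  obtain ⟨s, r, hsr, α, p, hp, hker, hgcd⟩ := h
  exact ⟨s, r, hsr, α, e.toLinearMap ∘ₗ p, e.surjective.comp hp, by rw [e.ker_comp, hker], hgcd⟩

variable {S : Type*} [CommRing S] [Algebra R S]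

theorem mulVecLin_map_algebraMap_comp_piScalarRight {s r : Type*} [Fintype s] [DecidableEq s]
    [Fintype r] [DecidableEq r] (α : Matrix s r R) :
    (α.map (algebraMap R S)).mulVecLin ∘ₗ (piScalarRight R S S r).toLinearMap =
      (piScalarRight R S S s).toLinearMap ∘ₗ α.mulVecLin.baseChange S := by
  ext j k
  simp [Matrix.mulVec, dotProduct, Pi.single_apply, Algebra.smul_def]

theorem exact_mulVecLin_map_algebraMap {s r : Type*} [Fintype s] [DecidableEq s]
    [Fintype r] {α : Matrix s r R} {p : (s → R) →ₗ[R] M}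
    (h : Function.Exact α.mulVecLin p) (hp : Function.Surjective p) :
    Function.Exact (α.map (algebraMap R S)).mulVecLin
      (p.baseChange S ∘ₗ (piScalarRight R S S s).symm.toLinearMap) := by
  classical
  have hexact : Function.Exact (α.mulVecLin.baseChange S) (p.baseChange S) := lTensor_exact S h hp
  refine Function.Exact.of_ladder_linearEquiv_of_exact (e₁ := piScalarRight R S S r)
    (e₂ := piScalarRight R S S s) (e₃ := .refl S _)
    (mulVecLin_map_algebraMap_comp_piScalarRight α) ?_ hexact
  exact LinearMap.ext fun x =>
    congrArg (p.baseChange S) ((piScalarRight R S S s).symm_apply_apply x)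

theorem IsOrderOf.baseChange (hRS : PreservesGCD (algebraMap R S)) (h : IsOrderOf R M d) :
    IsOrderOf S (S ⊗[R] M) (algebraMap R S d) := by
  rw [isOrderOf_iff_isSetGCD] at h ⊢
  obtain ⟨s, r, hsr, α, p, hp, hexact, hgcd⟩ := h
  refine ⟨s, r, hsr, α.map (algebraMap R S), _,
    (LinearMap.lTensor_surjective S hp).comp (LinearEquiv.surjective _),
    exact_mulVecLin_map_algebraMap hexact hp, ?_⟩
  have hminors := hRS hgcd
  rw [← Set.range_comp] at hminors
  convert! hminors using 3 with c
  exact (RingHom.map_det _ _).symm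

end Order

section Torsion

variable (R S M : Type*) [CommRing R] [CommRing S] [Algebra R S] [AddCommGroup M] [Module R M]

theorem exact_subtype_torsion_mk_fractionRing :
    Function.Exact (Submodule.torsion R M).subtype (TensorProduct.mk R (FractionRing R) M 1) := by
  intro x
  rw [IsLocalizedModule.eq_zero_iff (nonZeroDivisors R), ← Submodule.mem_torsion_iff]
  simp

variable {R M} in
theorem map_mem_torsion {N : Type*} [AddCommGroup N] [Module R N] (f : M →ₗ[R] N)
    {x : M} (hx : x ∈ Submodule.torsion R M) : f x ∈ Submodule.torsion R N := by
  obtain ⟨c, hc⟩ := hx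
  exact ⟨c, by rw [Submonoid.smul_def] at hc ⊢; rw [← map_smul, hc, map_zero]⟩

variable [Module.Flat R S]

variable {R} in
theorem algebraMap_mem_nonZeroDivisors_of_flat {c : R} (hc : c ∈ nonZeroDivisors R) :
    algebraMap R S c ∈ nonZeroDivisors S := by
  have hreg : IsSMulRegular S (algebraMap R S c) :=
    (isSMulRegular_algebraMap_iff S).2 (Module.Flat.isSMulRegular_of_nonZeroDivisors hc)
  exact mem_nonZeroDivisors_iff_left.2 fun x hx => hreg.right_eq_zero_of_smul hx

theorem baseChange_torsion_le :
    (Submodule.torsion R M).baseChange S ≤ Submodule.torsion S (S ⊗[R] M) := by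
  rw [Submodule.baseChange_eq_span, Submodule.span_le]
  rintro _ ⟨x, ⟨c, hc⟩, rfl⟩
  refine ⟨⟨algebraMap R S c, algebraMap_mem_nonZeroDivisors_of_flat S c.2⟩, ?_⟩
  rw [Submonoid.smul_def] at hc ⊢
  rw [algebraMap_smul, ← map_smul, hc, map_zero]

-- `M → Frac R ⊗ M` has kernel the torsion of `M`; the base change of its codomain is flat over
-- `S`, hence torsion-free, so it kills the torsion of `S ⊗ M`.
theorem torsion_tensorProduct_le [IsDomain R] :
    Submodule.torsion S (S ⊗[R] M) ≤ (Submodule.torsion R M).baseChange S := by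
  intro x hx
  have : Module.Flat R (FractionRing R ⊗[R] M) := .trans R (FractionRing R) _
  have hexact := Module.Flat.lTensor_exact S (exact_subtype_torsion_mk_fractionRing R M)
  have hzero := map_mem_torsion ((TensorProduct.mk R (FractionRing R) M 1).baseChange S) hx
  rw [Module.Flat.torsion_eq_bot, Submodule.mem_bot] at hzero
  exact (hexact x).1 hzero

theorem baseChange_torsion [IsDomain R] :
    (Submodule.torsion R M).baseChange S = Submodule.torsion S (S ⊗[R] M) :=
  le_antisymm (baseChange_torsion_le R S M) (torsion_tensorProduct_le R S M)

end Torsion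

open scoped AddMonoidAlgebra in
theorem order_torsion_baseChange_general {R S M K : Type*} [CommRing R] [IsDomain R] [CommRing S]
    [Algebra R S] [AddCommGroup K] [TwoUniqueSums K] [AddCommGroup M] [Module R M]
    (e : S ≃ₐ[R] R[K]) {d : R} (hd : IsOrderOf R (Submodule.torsion R M) d) :
    IsOrderOf S (Submodule.torsion S (S ⊗[R] M)) (algebraMap R S d) := by
  have : Module.Free R S := .of_equiv e.symm.toLinearEquiv
  exact (hd.baseChange (preservesGCD_algebraMap_of_algEquiv e)).of_linearEquiv
    ((Submodule.toBaseChange.toLinearEquiv S _).trans (.ofEq _ _ (baseChange_torsion R S M)))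

theorem order_torsion_baseChange (i : ι)
    (M : Type*) [AddCommGroup M] [Module (Ri m i) M] [Module.Finite (Ri m i) M]
    (d : Ri m i)
    (hd : IsOrderOf (Ri m i) (Submodule.torsion (Ri m i) M) d) :
    IsOrderOf (RH m) (Submodule.torsion (RH m) ((RH m) ⊗[Ri m i] M))
      (algebraMap (Ri m i) (RH m) d) :=
  order_torsion_baseChange_general
    (AlgEquiv.ofRingEquiv (f := piGroupRingEquiv (fun j => Fin (m j) → ℤ) i ℤ) fun f => by
      exact piGroupRingEquiv_mapDomainRingHom_single (fun j => Fin (m j) → ℤ) i f) hd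

end
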